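/- arXiv:2503.08312 — 2 statements merged into one kernel-verified Lean document; each statement's English description precedes it below -/
import Mathlib

section
/- Let A ≤ B be finite-dimensional subspaces of V, decomposed as A = A0 ⊕ A1 and B = Rad(B) ⊕ B1, where A0 ≤ Rad(V), A1 ≤ V1, and B1 is a complement of Rad(B) in B with A1 ≤ B1. Assume that B1 contains a subspace isometric to A1 which does not coincide with A1. Then there exist r ∈ ℕ and a coloring ξ from the set of subspaces of V isometric to A into r colors such that every subspace B' ≤ V isometric to B contains two subspaces, each isometric to A, receiving different ξ-colors; in particular ξ is not monochromatic on any isometric copy of B in V. -/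
open Module Submodule

/-- Two subspaces `X, Y` of `V` are isometric with respect to the bilinear form `β`. -/
def IsIsometric {V : Type*} [AddCommGroup V] [Module (ZMod 2) V]
    (β : V →ₗ[ZMod 2] V →ₗ[ZMod 2] ZMod 2) (X Y : Submodule (ZMod 2) V) : Prop :=
  ∃ f : X ≃ₗ[ZMod 2] Y, ∀ x y : X, β (x : V) (y : V) = β (f x : V) (f y : V)

/-- The radical of a subspace `X` with respect to the bilinear form `β`. -/
def srad {V : Type*} [AddCommGroup V] [Module (ZMod 2) V]
    (β : V →ₗ[ZMod 2] V →ₗ[ZMod 2] ZMod 2) (X : Submodule (ZMod 2) V) :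
    Submodule (ZMod 2) V :=
  X ⊓ (⨅ y ∈ X, LinearMap.ker (β.flip y))

/-!
The coloring sends a subspace of `V` to its image in the finite space `V ⧸ ker β`. For an isometric
embedding `g` of `B` into `V`, the vectors of `B` that `g` sends into `ker β` lie in the radical of
`B`. Hence the image of `g (A0 ⊕ A1)` in the quotient determines `A0 ⊕ A1` modulo the radical of
`B`, and so determines `A1` inside the complement `B1`. Replacing `A1` by another isometric copy in
`B1` therefore changes the color.
-/

theorem le_of_le_sup_of_disjoint {α : Type*} [Lattice α] [IsModularLattice α] [OrderBot α]
    {n w x y : α} (hnw : Disjoint n w) (hxw : x ≤ w) (hyw : y ≤ w) (hxy : x ≤ y ⊔ n) : x ≤ y :=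
  calc
    x ≤ (y ⊔ n) ⊓ w := le_inf hxy hxw
    _ = y ⊔ n ⊓ w := sup_inf_assoc_of_le n hyw
    _ = y := by rw [hnw.eq_bot, sup_bot_eq]

theorem le_sup_of_map_submoduleOf_le {K V Q : Type*} [Ring K] [AddCommGroup V] [Module K V]
    [AddCommGroup Q] [Module K Q] {B C D N : Submodule K V} {h : B →ₗ[K] Q} (hC : C ≤ B)
    (hker : (LinearMap.ker h).map B.subtype ≤ N)
    (hle : (C.submoduleOf B).map h ≤ (D.submoduleOf B).map h) : C ≤ D ⊔ N :=
  calc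
    C = (C.submoduleOf B).map B.subtype := (map_comap_eq_self (by simpa using hC)).symm
    _ ≤ (D.submoduleOf B ⊔ LinearMap.ker h).map B.subtype :=
      map_mono ((LinearMap.map_le_map_iff h).1 hle)
    _ = (D.submoduleOf B).map B.subtype ⊔ (LinearMap.ker h).map B.subtype := map_sup ..
    _ ≤ D ⊔ N := sup_le_sup (map_comap_le _ _) hker

theorem injective_coprod_of_disjoint_range {K M₁ M₂ M : Type*} [Ring K] [AddCommGroup M₁]
    [AddCommGroup M₂] [AddCommGroup M] [Module K M₁] [Module K M₂] [Module K M]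
    {p : M₁ →ₗ[K] M} {q : M₂ →ₗ[K] M} (hp : Function.Injective p) (hq : Function.Injective q)
    (hpq : Disjoint (LinearMap.range p) (LinearMap.range q)) :
    Function.Injective (p.coprod q) := by
  rw [← LinearMap.ker_eq_bot, LinearMap.ker_coprod_of_disjoint_range p q hpq,
    LinearMap.ker_eq_bot.2 hp, LinearMap.ker_eq_bot.2 hq, prod_bot]

section BilinForm

open LinearMap (BilinForm)

variable {K V : Type*} [CommRing K] [AddCommGroup V] [Module K V] {β : BilinForm K V}

theorem equivalent_restrict_range {U : Type*} [AddCommGroup U] [Module K U] {γ : BilinForm K U}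
    (g : γ →bᵢ β) (hg : Function.Injective g) :
    γ.Equivalent (β.restrict (LinearMap.range g.toLinearMap)) :=
  ⟨{ LinearEquiv.ofInjective g.toLinearMap hg with map_app' := g.map_app }⟩

theorem equivalent_restrict_map_submoduleOf {B C : Submodule K V} (hC : C ≤ B)
    (g : β.restrict B →bᵢ β) (hg : Function.Injective g) :
    (β.restrict ((C.submoduleOf B).map g.toLinearMap)).Equivalent (β.restrict C) := by
  let i : β.restrict C →bᵢ β.restrict B := ⟨inclusion hC, fun _ _ => rfl⟩
  have hrange : LinearMap.range (g.comp i).toLinearMap = (C.submoduleOf B).map g.toLinearMap := by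
    rw [LinearMap.BilinForm.Isometry.toLinearMap_comp, LinearMap.range_comp, range_inclusion]
    rfl
  rw [← hrange]
  exact (equivalent_restrict_range (g.comp i) (hg.comp (inclusion_injective hC))).symm

theorem equivalent_restrict_sup (hβ : β.IsRefl) {B R X Y : Submodule K V}
    (hR : R ≤ B ⊓ β.orthogonal B) (hX : X ≤ B) (hY : Y ≤ B) (hRX : Disjoint R X)
    (hRY : Disjoint R Y) (hXY : (β.restrict X).Equivalent (β.restrict Y)) :
    (β.restrict (R ⊔ X)).Equivalent (β.restrict (R ⊔ Y)) := by
  obtain ⟨f⟩ := hXY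
  have hRB {r v : V} (hr : r ∈ R) (hv : v ∈ B) : β r v = 0 ∧ β v r = 0 :=
    ⟨hβ v r ((hR hr).2 v hv), (hR hr).2 v hv⟩
  let i : R × X →ₗ[K] V := R.subtype.coprod X.subtype
  let j : R × X →ₗ[K] V := R.subtype.coprod (Y.subtype ∘ₗ f.toLinearMap)
  have hrange_f : LinearMap.range (Y.subtype ∘ₗ f.toLinearMap) = Y := by
    rw [LinearMap.range_comp, LinearEquiv.range, Submodule.map_top, range_subtype]
  have hi : Function.Injective i :=
    injective_coprod_of_disjoint_range R.injective_subtype X.injective_subtype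
      (by rwa [range_subtype, range_subtype])
  have hj : Function.Injective j :=
    injective_coprod_of_disjoint_range R.injective_subtype
      (Y.injective_subtype.comp f.toLinearEquiv.injective) (by rwa [range_subtype, hrange_f])
  have hij : ∀ p q : R × X, β (j p) (j q) = β (i p) (i q) := by
    rintro ⟨r, x⟩ ⟨s, y⟩
    have hfxy : β (f x) (f y) = β x y := f.map_app y x
    simp [i, j, hfxy, hRB r.2 (hX y.2), hRB s.2 (hX x.2), hRB r.2 (hY (f y).2),
      hRB s.2 (hY (f x).2)]
  let gi : β.comp i i →bᵢ β := ⟨i, fun _ _ => rfl⟩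
  let gj : β.comp i i →bᵢ β := ⟨j, hij⟩
  have h := (equivalent_restrict_range gi hi).symm.trans (equivalent_restrict_range gj hj)
  rwa [LinearMap.range_coprod, LinearMap.range_coprod, hrange_f, range_subtype, range_subtype] at h

theorem ker_le_orthogonal (hβ : β.IsRefl) {B : Submodule K V} :
    LinearMap.ker β ≤ β.orthogonal B := fun x hx y _ =>
  hβ x y (by rw [LinearMap.mem_ker.1 hx, LinearMap.zero_apply])

theorem map_subtype_ker_mkQ_comp_le (hβ : β.IsRefl) {B : Submodule K V}
    (g : β.restrict B →bᵢ β) :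
    (LinearMap.ker ((LinearMap.ker β).mkQ ∘ₗ g.toLinearMap)).map B.subtype ≤
      B ⊓ β.orthogonal B := by
  rintro _ ⟨x, hx, rfl⟩
  have hgx : β (g x) = 0 := (Submodule.Quotient.mk_eq_zero _).1 hx
  refine ⟨x.2, fun y hy => hβ x y ?_⟩
  calc
    β x y = β (g x) (g ⟨y, hy⟩) := (g.map_app x ⟨y, hy⟩).symm
    _ = 0 := by rw [hgx, LinearMap.zero_apply]

theorem injOn_map_mkQ_map_submoduleOf (hβ : β.IsRefl) {B R W : Submodule K V}
    (g : β.restrict B →bᵢ β) (hR : R ≤ B ⊓ β.orthogonal B) (hW : W ≤ B)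
    (hdisj : Disjoint (B ⊓ β.orthogonal B) W) :
    Set.InjOn
      (fun X => (((R ⊔ X).submoduleOf B).map g.toLinearMap).map (LinearMap.ker β).mkQ)
      (Set.Iic W) := by
  suffices hle : ∀ X ≤ W, ∀ Y ≤ W,
      (((R ⊔ X).submoduleOf B).map g.toLinearMap).map (LinearMap.ker β).mkQ =
        (((R ⊔ Y).submoduleOf B).map g.toLinearMap).map (LinearMap.ker β).mkQ → X ≤ Y from
    fun X hX Y hY hXY => (hle X hX Y hY hXY).antisymm (hle Y hY X hX hXY.symm)
  intro X hX Y hY hXY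
  rw [← map_comp, ← map_comp] at hXY
  have hsup : R ⊔ X ≤ R ⊔ Y ⊔ B ⊓ β.orthogonal B :=
    le_sup_of_map_submoduleOf_le (sup_le (hR.trans inf_le_left) (hX.trans hW))
      (map_subtype_ker_mkQ_comp_le hβ g) hXY.le
  refine le_of_le_sup_of_disjoint hdisj hX hY (le_sup_right.trans (hsup.trans ?_))
  exact sup_le (sup_le (hR.trans le_sup_right) le_sup_left) le_sup_right

theorem coloring_not_monochromatic_on_copies_of_B_general (hβ : β.IsRefl)
    [Finite (V ⧸ LinearMap.ker β)] {B A0 A1 A1' B1 : Submodule K V}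
    (hA0 : A0 ≤ B ⊓ β.orthogonal B) (hB1 : B1 ≤ B) (hdisj : Disjoint (B ⊓ β.orthogonal B) B1)
    (hA1 : A1 ≤ B1) (hA1' : A1' ≤ B1) (hiso : (β.restrict A1').Equivalent (β.restrict A1))
    (hne : A1' ≠ A1) :
    ∃ (r : ℕ) (ξ : Submodule K V → Fin r),
      ∀ B' : Submodule K V, (β.restrict B').Equivalent (β.restrict B) →
        ∃ A' A'' : Submodule K V, A' ≤ B' ∧ A'' ≤ B' ∧
          (β.restrict A').Equivalent (β.restrict (A0 ⊔ A1)) ∧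
          (β.restrict A'').Equivalent (β.restrict (A0 ⊔ A1)) ∧ ξ A' ≠ ξ A'' := by
  obtain ⟨r, ⟨c⟩⟩ := Finite.exists_equiv_fin (Submodule K (V ⧸ LinearMap.ker β))
  refine ⟨r, fun X => c (X.map (LinearMap.ker β).mkQ), fun B' ⟨f⟩ => ?_⟩
  let i : β.restrict B' →bᵢ β := ⟨B'.subtype, fun _ _ => rfl⟩
  let g : β.restrict B →bᵢ β := i.comp f.symm.toIsometry
  have hg : Function.Injective g := B'.injective_subtype.comp f.symm.toLinearEquiv.injective
  have hgB' (C : Submodule K B) : C.map g.toLinearMap ≤ B' :=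
    map_le_iff_le_comap.2 fun x _ => (f.symm x).2
  have hle {X : Submodule K V} (hX : X ≤ B1) : A0 ⊔ X ≤ B :=
    sup_le (hA0.trans inf_le_left) (hX.trans hB1)
  have hA'A : (β.restrict (A0 ⊔ A1')).Equivalent (β.restrict (A0 ⊔ A1)) :=
    equivalent_restrict_sup hβ hA0 (hA1'.trans hB1) (hA1.trans hB1) (hdisj.mono hA0 hA1')
      (hdisj.mono hA0 hA1) hiso
  refine ⟨_, _, hgB' _, hgB' _,
    (equivalent_restrict_map_submoduleOf (hle hA1') g hg).trans hA'A,
    equivalent_restrict_map_submoduleOf (hle hA1) g hg, fun hcolor => hne ?_⟩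
  exact injOn_map_mkQ_map_submoduleOf hβ g hA0 hB1 hdisj hA1' hA1 (c.injective hcolor)

end BilinForm

section ZModTwo

variable {V : Type*} [AddCommGroup V] [Module (ZMod 2) V] {β : LinearMap.BilinForm (ZMod 2) V}
  {X Y : Submodule (ZMod 2) V}

theorem isIsometric_iff_equivalent_restrict :
    IsIsometric β X Y ↔ (β.restrict X).Equivalent (β.restrict Y) :=
  ⟨fun ⟨f, hf⟩ => ⟨{ f with map_app' := fun x y => (hf x y).symm }⟩,
    fun ⟨f⟩ => ⟨f, fun x y => (f.map_app y x).symm⟩⟩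

theorem srad_eq_inf_orthogonal (hβ : β.IsRefl) : srad β X = X ⊓ β.orthogonal X := by
  ext x
  simp [srad, hβ.eq_iff]

end ZModTwo

/-- `V` is a countably infinite dimensional space over `GF(2)` with an alternating form
`β`, `V = V1 ⊕ Rad(V)` where `V1 = span{e_i, e_i* : i ≤ k}` is an orthogonal sum of `k ≥ 1`
hyperbolic planes and `Rad(V) = ker β` is infinite dimensional.  If `A ≤ B` are finite
dimensional subspaces, `A = A0 ⊕ A1` with `A0 ≤ Rad(V)`, `A1 ≤ V1`,
`B = Rad(B) ⊕ B1`, `A1 ≤ B1`, and `B1` contains an isometric copy of `A1` different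
from `A1`, then some finite coloring of the copies of `A` in `V` is non-monochromatic on
every isometric copy of `B` in `V`. -/
theorem coloring_not_monochromatic_on_copies_of_B
    (k : ℕ) (hk : 1 ≤ k)
    (V : Type*) [AddCommGroup V] [Module (ZMod 2) V]
    (β : V →ₗ[ZMod 2] V →ₗ[ZMod 2] ZMod 2)
    (halt : ∀ v : V, β v v = 0)
    (e estar : Fin k → V)
    (hef : ∀ i j, β (e i) (estar j) = if i = j then 1 else 0)
    (hee : ∀ i j, β (e i) (e j) = 0)
    (hff : ∀ i j, β (estar i) (estar j) = 0)
    (hrank : Module.rank (ZMod 2) V = Cardinal.aleph0)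
    (hcompl : IsCompl (span (ZMod 2) (Set.range e ∪ Set.range estar)) (LinearMap.ker β))
    (hradinf : ¬ FiniteDimensional (ZMod 2) (LinearMap.ker β))
    (A B A0 A1 B1 : Submodule (ZMod 2) V)
    (hAB : A ≤ B)
    (hAfin : FiniteDimensional (ZMod 2) A) (hBfin : FiniteDimensional (ZMod 2) B)
    (hA0rad : A0 ≤ LinearMap.ker β)
    (hA1V1 : A1 ≤ span (ZMod 2) (Set.range e ∪ Set.range estar))
    (hAdec : A = A0 ⊔ A1) (hAdisj : Disjoint A0 A1)
    (hBdec : B = srad β B ⊔ B1) (hBdisj : Disjoint (srad β B) B1)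
    (hA1B1 : A1 ≤ B1)
    (hcopy : ∃ A1' : Submodule (ZMod 2) V, A1' ≤ B1 ∧ IsIsometric β A1' A1 ∧ A1' ≠ A1) :
    ∃ (r : ℕ) (ξ : Submodule (ZMod 2) V → Fin r),
      ∀ B' : Submodule (ZMod 2) V, IsIsometric β B' B →
        ∃ A' A'' : Submodule (ZMod 2) V,
          A' ≤ B' ∧ A'' ≤ B' ∧ IsIsometric β A' A ∧ IsIsometric β A'' A ∧
          ξ A' ≠ ξ A'' := by
  obtain ⟨A1', hA1', hiso, hne⟩ := hcopy
  have hβ : β.IsRefl := LinearMap.IsAlt.isRefl halt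
  have : (LinearMap.ker β).CoFG :=
    FG.cofg_of_isCompl hcompl (fg_span ((Set.finite_range e).union (Set.finite_range estar)))
  have : Finite (V ⧸ LinearMap.ker β) := Module.finite_of_finite (ZMod 2)
  have hA0 : A0 ≤ B ⊓ LinearMap.BilinForm.orthogonal β B :=
    le_inf (le_sup_left.trans (hAdec.ge.trans hAB)) ((ker_le_orthogonal hβ).trans' hA0rad)
  have hB1 : B1 ≤ B := le_sup_right.trans hBdec.ge
  rw [srad_eq_inf_orthogonal hβ] at hBdisj
  simp only [isIsometric_iff_equivalent_restrict, hAdec] at hiso ⊢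
  exact coloring_not_monochromatic_on_copies_of_B_general hβ hA0 hB1 hBdisj hA1B1 hA1' hiso hne
end

section
/- Assume k ≥ 1. Let A ≤ B be finite-dimensional subspaces of V such that B ≠ Rad(B) and 1 ≤ codim_A(A ∩ Rad(V)) < codim_B(Rad(B)), i.e. dim A − dim(A ∩ Rad(V)) is at least 1 and strictly less than dim B − dim Rad(B). Then the age of (V, β) does not satisfy the Ramsey property with respect to copies of A in copies of B: there exist r ∈ ℕ and a coloring ξ from the set of subspaces of V isometric to A into r colors such that every subspace B' ≤ V isometric to B contains two subspaces, each isometric to A, receiving different ξ-colors. -/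
open Module Submodule

/-!
Colour a subspace `X` by its image in the finite space `V ⧸ ker β`, that is, by `X ⊔ ker β`.
Since `β` has smaller rank on `A` than on `B`, no copy of `A` inside a copy `B'` of `B` spans `B'`
modulo `ker β`. If moreover a copy `A'` is not orthogonal to all of `B'`, then some `u` in `B'` is
neither orthogonal to `A'` nor in `A' ⊔ ker β`, because `B'` is not the union of two proper
subspaces; the symplectic transvection along `u` carries `A'` to a copy of another colour. A copy of
`A` orthogonal to `B'` is first made non-orthogonal by a transvection along a vector of `B'` outside
the radical of `B'`: orthogonality makes every such transvection isometric on it.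
-/

section Submodules

variable {R M : Type*}

theorem map_transvection_le [Semiring R] [AddCommMonoid M] [Module R M] {X Y : Submodule R M}
    {φ : Dual R M} {v : M} (hXY : X ≤ Y) (hv : v ∈ Y) :
    X.map (LinearMap.transvection φ v) ≤ Y := by
  rintro _ ⟨x, hx, rfl⟩
  exact Y.add_mem (hXY hx) (Y.smul_mem _ hv)

theorem exists_linearMap_sub_mem_of_le_sup [Ring R] [AddCommGroup M] [Module R M]
    {X Y Z : Submodule R M} [Projective R X] (h : X ≤ Y ⊔ Z) :
    ∃ p : X →ₗ[R] Y, ∀ x : X, (x : M) - p x ∈ Z := by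
  rw [sup_eq_range] at h
  obtain ⟨q, hq⟩ := projective_lifting_property (Y.subtype.coprod Z.subtype).rangeRestrict
    (inclusion h) (LinearMap.surjective_rangeRestrict _)
  refine ⟨LinearMap.fst R Y Z ∘ₗ q, fun x => ?_⟩
  have hx : ((q x).1 : M) + (q x).2 = x := congrArg Subtype.val (LinearMap.congr_fun hq x)
  simp [← hx]

theorem exists_coloring_sup_eq_of_eq [Ring R] [Finite R] [AddCommGroup M] [Module R M]
    (N : Submodule R M) [Module.Finite R (M ⧸ N)] :
    ∃ (r : ℕ) (ξ : Submodule R M → Fin r), ∀ X Y, ξ X = ξ Y → X ⊔ N = Y ⊔ N := by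
  have : Finite (M ⧸ N) := Module.finite_of_finite R
  obtain ⟨r, ⟨c⟩⟩ := Finite.exists_equiv_fin (Submodule R (M ⧸ N))
  refine ⟨r, fun X => c (X.map N.mkQ), fun X Y hXY => ?_⟩
  have hcomap := congrArg (comap N.mkQ) (c.injective hXY)
  rwa [comap_map_mkQ, comap_map_mkQ, sup_comm, sup_comm N] at hcomap

end Submodules

section CommRing

variable {R M : Type*} [CommRing R] [AddCommGroup M] [Module R M]
  {β : M →ₗ[R] M →ₗ[R] R} {X Y Z : Submodule R M}

/-- `IsCopy β X Y` says that the submodules `X` and `Y` are isometric for `β`; over `ZMod 2` it is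
`IsIsometric`. -/
def IsCopy (β : M →ₗ[R] M →ₗ[R] R) (X Y : Submodule R M) : Prop :=
  ∃ f : X ≃ₗ[R] Y, ∀ x y : X, β (x : M) (y : M) = β (f x : M) (f y : M)

theorem IsCopy.refl (β : M →ₗ[R] M →ₗ[R] R) (X : Submodule R M) : IsCopy β X X :=
  ⟨.refl R X, fun _ _ => rfl⟩

theorem IsCopy.symm (h : IsCopy β X Y) : IsCopy β Y X := by
  obtain ⟨f, hf⟩ := h
  exact ⟨f.symm, fun x y => by simp [hf]⟩

theorem IsCopy.trans (hXY : IsCopy β X Y) (hYZ : IsCopy β Y Z) : IsCopy β X Z := by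
  obtain ⟨f, hf⟩ := hXY
  obtain ⟨g, hg⟩ := hYZ
  exact ⟨f.trans g, fun x y => by simp [hf, hg]⟩

theorem isCopy_range {j : X →ₗ[R] M} (hj : Function.Injective j)
    (hβ : ∀ x y : X, β (j x) (j y) = β x y) : IsCopy β (LinearMap.range j) X :=
  .symm ⟨LinearEquiv.ofInjective j hj, fun x y => (hβ x y).symm⟩

theorem IsCopy.exists_le (hYZ : IsCopy β Y Z) (hXY : X ≤ Y) : ∃ X' ≤ Z, IsCopy β X' X := by
  obtain ⟨g, hg⟩ := hYZ
  refine ⟨LinearMap.range (Z.subtype ∘ₗ g.toLinearMap ∘ₗ inclusion hXY), ?_, isCopy_range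
    (Z.injective_subtype.comp (g.injective.comp (inclusion_injective hXY)))
    fun x y => (hg (inclusion hXY x) (inclusion hXY y)).symm⟩
  rintro _ ⟨x, rfl⟩
  exact (g _).2

theorem IsCopy.ne_bot (h : IsCopy β X Y) (hX : X ≠ ⊥) : Y ≠ ⊥ := by
  obtain ⟨f, -⟩ := h
  rwa [← nontrivial_iff_ne_bot, ← f.toEquiv.nontrivial_congr, nontrivial_iff_ne_bot]

/-- The rank of the restriction of the bilinear form `β` to the submodule `X`, as a cardinal so
that it is meaningful without finiteness of `X`. -/
noncomputable def formRank (β : M →ₗ[R] M →ₗ[R] R) (X : Submodule R M) : Cardinal :=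
  (β.domRestrict₁₂ X X).rank

theorem formRank_eq_zero [Nontrivial R] (h : X ≤ X.orthogonalBilin β) : formRank β X = 0 := by
  have hzero : β.domRestrict₁₂ X X = 0 := by
    ext x y
    exact h y.2 x x.2
  rw [formRank, hzero, LinearMap.rank_zero]

theorem formRank_le_of_linearMap (p : X →ₗ[R] Y) (hp : ∀ x y : X, β (p x) (p y) = β x y) :
    formRank β X ≤ formRank β Y := by
  have hpull : β.domRestrict₁₂ X X = p.dualMap ∘ₗ β.domRestrict₁₂ Y Y ∘ₗ p := by
    ext x y
    exact (hp x y).symm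
  calc formRank β X = (p.dualMap ∘ₗ β.domRestrict₁₂ Y Y ∘ₗ p).rank := by rw [formRank, hpull]
    _ ≤ (β.domRestrict₁₂ Y Y ∘ₗ p).rank := LinearMap.rank_comp_le_right _ _
    _ ≤ formRank β Y := LinearMap.rank_comp_le_left _ _

theorem IsCopy.formRank_le (h : IsCopy β X Y) : formRank β X ≤ formRank β Y := by
  obtain ⟨f, hf⟩ := h
  exact formRank_le_of_linearMap f.toLinearMap fun x y => (hf x y).symm

theorem formRank_le_of_le_sup_ker (hβ : β.IsRefl) [Projective R X]
    (h : X ≤ Y ⊔ LinearMap.ker β) : formRank β X ≤ formRank β Y := by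
  obtain ⟨p, hp⟩ := exists_linearMap_sub_mem_of_le_sup h
  refine formRank_le_of_linearMap p fun x y => ?_
  have hleft : β x = β (p x) := LinearMap.sub_mem_ker_iff.mp (hp x)
  have hright : β (p x) y = β (p x) (p y) := by
    rw [← sub_eq_zero, ← map_sub]
    exact hβ _ _ (LinearMap.congr_fun (hp y) (p x))
  rw [hleft, hright]

end CommRing

section Field

variable {K V : Type*} [Field K] [AddCommGroup V] [Module K V] {β : V →ₗ[K] V →ₗ[K] K}
  {X Y : Submodule K V}

theorem formRank_eq_finrank_sub [FiniteDimensional K X] :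
    formRank β X = ↑(finrank K X - finrank K ↥(X ⊓ X.orthogonalBilin β.flip)) := by
  have hker : LinearMap.ker (β.domRestrict₁₂ X X) =
      (X ⊓ X.orthogonalBilin β.flip).comap X.subtype := by
    ext x
    simp [LinearMap.ext_iff, LinearMap.domRestrict₁₂_apply]
  rw [← (comapSubtypeEquivOfLe inf_le_left).finrank_eq, ← hker,
    ← (β.domRestrict₁₂ X X).finrank_range_add_finrank_ker, Nat.add_sub_cancel, finrank_eq_rank]
  rfl

-- Applied with `c = 1` and `φ = β v` (symplectic transvections), and with `c = 0` when `v` is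
-- orthogonal to `X`.
theorem isCopy_map_transvection (hβ : β.IsAlt) {v : V} (hv : v ∉ X) {φ : Dual K V} {c : K}
    (hφ : ∀ x ∈ X, β v x = c * φ x) : IsCopy β (X.map (LinearMap.transvection φ v)) X := by
  rw [← LinearMap.range_domRestrict]
  refine isCopy_range ?_ fun x y => ?_
  · refine LinearMap.ker_eq_bot.mp (LinearMap.ker_eq_bot'.mpr fun x hx => ?_)
    have hx' : (x : V) + φ x • v = 0 := hx
    have hφx : φ x = 0 := by
      by_contra hne
      refine hv ((X.smul_mem_iff hne).mp ?_)
      rw [← neg_eq_of_add_eq_zero_right hx']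
      exact X.neg_mem x.2
    simpa [hφx] using hx'
  · simp only [LinearMap.domRestrict_apply, LinearMap.transvection.apply, map_add, map_smul,
      LinearMap.add_apply, LinearMap.smul_apply, smul_eq_mul, hβ.self_eq_zero, ← hβ.neg v x,
      hφ x x.2, hφ y y.2]
    ring

theorem exists_isCopy_not_le_orthogonalBilin (hβ : β.IsAlt) (hX : X ≠ ⊥) (hXY : X ≤ Y)
    (hY : ¬ Y ≤ Y.orthogonalBilin β) :
    ∃ X' ≤ Y, IsCopy β X' X ∧ ¬ Y ≤ X'.orthogonalBilin β := by
  by_cases hYX : Y ≤ X.orthogonalBilin β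
  · obtain ⟨v, hvY, hv⟩ := SetLike.not_le_iff_exists.mp hY
    obtain ⟨a, ha, ha0⟩ := exists_mem_ne_zero_of_ne_bot hX
    obtain ⟨φ, hφa⟩ := Projective.exists_dual_eq_one K ha0
    have hvX : v ∉ X := fun hvX => hv fun y hy => hβ.isRefl _ _ (hYX hy v hvX)
    refine ⟨X.map (LinearMap.transvection φ v), map_transvection_le hXY hvY,
      isCopy_map_transvection (c := 0) hβ hvX fun x hx => ?_, fun hle => hv fun y hy => ?_⟩
    · rw [hβ.isRefl _ _ (hYX hvY x hx), zero_mul]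
    · have horth := hle hy _ (mem_map_of_mem ha)
      rw [LinearMap.transvection.apply, hφa, one_smul, map_add, LinearMap.add_apply,
        hYX hy a ha, zero_add] at horth
      exact hβ.isRefl _ _ horth
  · exact ⟨X, hXY, .refl β X, hYX⟩

theorem exists_isCopy_sup_ker_ne (hβ : β.IsAlt) (hXY : X ≤ Y) (horth : ¬ Y ≤ X.orthogonalBilin β)
    (hsup : ¬ Y ≤ X ⊔ LinearMap.ker β) :
    ∃ X' ≤ Y, IsCopy β X' X ∧ X' ⊔ LinearMap.ker β ≠ X ⊔ LinearMap.ker β := by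
  obtain ⟨u, huY, hu⟩ := Set.not_subset.mp (mt AddSubgroupClass.subset_union.mp
    (not_or.mpr ⟨horth, hsup⟩))
  obtain ⟨huorth, husup⟩ := not_or.mp hu
  have huX : u ∉ X := fun h => husup (mem_sup_left h)
  obtain ⟨a, ha, hau⟩ : ∃ a ∈ X, β u a ≠ 0 := by
    by_contra! hzero
    exact huorth fun a ha => hβ.isRefl _ _ (hzero a ha)
  refine ⟨X.map (LinearMap.transvection (β u) u), map_transvection_le hXY huY,
    isCopy_map_transvection hβ huX fun x _ => (one_mul _).symm, fun heq => husup ?_⟩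
  have hmem : a + β u a • u ∈ X ⊔ LinearMap.ker β :=
    heq ▸ mem_sup_left (mem_map_of_mem (f := LinearMap.transvection (β u) u) ha)
  exact (smul_mem_iff _ hau).mp ((Submodule.add_mem_iff_right _ (mem_sup_left ha)).mp hmem)

theorem not_ramsey_when_codims_differ_general [Finite K] [FiniteDimensional K (V ⧸ LinearMap.ker β)]
    (hβ : β.IsAlt) {A B : Submodule K V} (hAB : A ≤ B) (hA : A ≠ ⊥)
    (hlt : formRank β A < formRank β B) :
    ∃ (r : ℕ) (ξ : Submodule K V → Fin r),
      ∀ B' : Submodule K V, IsCopy β B' B →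
        ∃ A' A'' : Submodule K V,
          A' ≤ B' ∧ A'' ≤ B' ∧ IsCopy β A' A ∧ IsCopy β A'' A ∧ ξ A' ≠ ξ A'' := by
  obtain ⟨r, ξ, hξ⟩ := exists_coloring_sup_eq_of_eq (LinearMap.ker β)
  refine ⟨r, ξ, fun B' hB' => ?_⟩
  have hlt' : formRank β A < formRank β B' := hlt.trans_le hB'.symm.formRank_le
  obtain ⟨A₀, hA₀B', hA₀A⟩ := hB'.symm.exists_le hAB
  obtain ⟨A₁, hA₁B', hA₁A₀, hA₁orth⟩ :=
    exists_isCopy_not_le_orthogonalBilin hβ (hA₀A.symm.ne_bot hA) hA₀B' fun h =>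
      hlt'.ne_bot (formRank_eq_zero h)
  have hA₁A := hA₁A₀.trans hA₀A
  obtain ⟨A₂, hA₂B', hA₂A₁, hne⟩ := exists_isCopy_sup_ker_ne hβ hA₁B' hA₁orth fun hsup =>
    hlt'.not_ge ((formRank_le_of_le_sup_ker hβ.isRefl hsup).trans hA₁A.formRank_le)
  exact ⟨A₂, A₁, hA₂B', hA₁B', hA₂A₁.trans hA₁A, hA₁A, mt (hξ _ _) hne⟩

end Field

theorem srad_eq_inf_orthogonalBilin {V : Type*} [AddCommGroup V] [Module (ZMod 2) V]
    (β : V →ₗ[ZMod 2] V →ₗ[ZMod 2] ZMod 2) (X : Submodule (ZMod 2) V) :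
    srad β X = X ⊓ X.orthogonalBilin β.flip := by
  ext x
  simp [srad]

/-- `V` is a countably infinite dimensional space over `GF(2)` with an alternating form
`β`, `V = V1 ⊕ Rad(V)` where `V1` is an orthogonal sum of `k ≥ 1` hyperbolic planes and
`Rad(V) = ker β` is infinite dimensional.  If `A ≤ B` are finite dimensional subspaces
with `B ≠ Rad(B)` and `1 ≤ dim A − dim(A ∩ Rad(V)) < dim B − dim Rad(B)`, then the age of
`(V, β)` does not satisfy the Ramsey property with respect to copies of `A` in copies of
`B`: some finite coloring of the copies of `A` is non-monochromatic on every isometric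
copy of `B` in `V`. -/
theorem not_ramsey_when_codims_differ
    (k : ℕ) (hk : 1 ≤ k)
    (V : Type*) [AddCommGroup V] [Module (ZMod 2) V]
    (β : V →ₗ[ZMod 2] V →ₗ[ZMod 2] ZMod 2)
    (halt : ∀ v : V, β v v = 0)
    (e estar : Fin k → V)
    (hef : ∀ i j, β (e i) (estar j) = if i = j then 1 else 0)
    (hee : ∀ i j, β (e i) (e j) = 0)
    (hff : ∀ i j, β (estar i) (estar j) = 0)
    (hrank : Module.rank (ZMod 2) V = Cardinal.aleph0)
    (hcompl : IsCompl (span (ZMod 2) (Set.range e ∪ Set.range estar)) (LinearMap.ker β))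
    (hradinf : ¬ FiniteDimensional (ZMod 2) (LinearMap.ker β))
    (A B : Submodule (ZMod 2) V)
    (hAB : A ≤ B)
    (hAfin : FiniteDimensional (ZMod 2) A) (hBfin : FiniteDimensional (ZMod 2) B)
    (hBne : B ≠ srad β B)
    (hge1 : 1 ≤ finrank (ZMod 2) A - finrank (ZMod 2) ↥(A ⊓ LinearMap.ker β))
    (hlt : finrank (ZMod 2) A - finrank (ZMod 2) ↥(A ⊓ LinearMap.ker β) <
      finrank (ZMod 2) B - finrank (ZMod 2) ↥(srad β B)) :
    ∃ (r : ℕ) (ξ : Submodule (ZMod 2) V → Fin r),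
      ∀ B' : Submodule (ZMod 2) V, IsIsometric β B' B →
        ∃ A' A'' : Submodule (ZMod 2) V,
          A' ≤ B' ∧ A'' ≤ B' ∧ IsIsometric β A' A ∧ IsIsometric β A'' A ∧
          ξ A' ≠ ξ A'' := by
  have : FiniteDimensional (ZMod 2) (V ⧸ LinearMap.ker β) :=
    have := FiniteDimensional.span_of_finite (ZMod 2)
      ((Set.finite_range e).union (Set.finite_range estar))
    Module.Finite.equiv (quotientEquivOfIsCompl _ _ hcompl.symm).symm
  have hA : A ≠ ⊥ := by
    rintro rfl
    simp at hge1
  have hker : finrank (ZMod 2) ↥(A ⊓ LinearMap.ker β) ≤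
      finrank (ZMod 2) ↥(A ⊓ A.orthogonalBilin β.flip) :=
    finrank_mono (inf_le_inf_left A fun x hx y _ => LinearMap.congr_fun hx y)
  refine not_ramsey_when_codims_differ_general halt hAB hA ?_
  rw [formRank_eq_finrank_sub, formRank_eq_finrank_sub, ← srad_eq_inf_orthogonalBilin β B]
  exact_mod_cast (Nat.sub_le_sub_left hker _).trans_lt hlt
end
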